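/- For integers r ≥ 1, s ≥ 0 and n ≥ r+s, the number of Dyck n-paths whose first ascent is ≥ r and whose first s nonfinal descents all have length 1 is C^{(r+s+1)}_{n−r−s}. -/

import Mathlib

/-!
The paths in question are `U^r` followed by a word `w` which starts at height `r` and consists of
upsteps and `s` blocks `DU`, followed by an arbitrary completion to height `0`. Indeed a nonfinal
descent of length `1` is exactly a `D` followed by a `U` and not preceded by a `D`. As `r ≥ 1`, no
block `DU` can leave the first quadrant.

The predicate `Good s h m` describes such completions from height `h` with `s` blocks `DU` still
to come and `m` upsteps outside these blocks (`good_iff`). Classifying by the first letter, the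
number of completions depends on `k = h + s` and `m` only: an initial `U` leads from `(k, m)` to
`(k + 1, m - 1)`, and an initial block `DU`, or an initial `D` when `s = 0`, to `(k - 1, m)`. This
is the Pascal-type recurrence of the ballot numbers `C^{(k+1)}_m` (`ballot_succ_succ`,
`ballot_one_succ`), hence `ncard_good`.
-/

/-- The ballot number `C^{(k)}_n = C(2n+k-1, n) - C(2n+k-1, n-1)`, with `C(a,-1) = 0`. -/
def ballot (k n : ℕ) : ℕ :=
  Nat.choose (2 * n + k - 1) n - (if n = 0 then 0 else Nat.choose (2 * n + k - 1) (n - 1))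

/-- A path (word in upsteps `true` and downsteps `false`) stays weakly in the
first quadrant: every prefix has at least as many upsteps as downsteps. -/
def IsFirstQuadrant (p : List Bool) : Prop :=
  ∀ t : ℕ, (p.take t).count false ≤ (p.take t).count true

/-- A Dyck `n`-path: a first-quadrant path with `n` upsteps and `n` downsteps. -/
def IsDyck (n : ℕ) (p : List Bool) : Prop :=
  p.count true = n ∧ p.count false = n ∧ IsFirstQuadrant p

/-- The first ascent of a path: the length of its maximal initial run of upsteps. -/
def firstAscent (p : List Bool) : ℕ := (p.takeWhile (fun b => b)).length

/-- The maximal runs of a word, as a list of (letter, run length) pairs, left to right. -/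
def runLengths : List Bool → List (Bool × ℕ)
  | [] => []
  | a :: rest =>
    match runLengths rest with
    | [] => [(a, 1)]
    | (b, m) :: t => if a = b then (a, m + 1) :: t else (a, 1) :: (b, m) :: t

/-- The descents of a path: the lengths of its maximal runs of downsteps, left to right. -/
def descents (p : List Bool) : List ℕ :=
  ((runLengths p).filter (fun r => !r.1)).map Prod.snd

/-- The nonfinal descents of a path: its descents, excluding the final one when the
corresponding run of downsteps ends the path. -/
def nonfinalDescents (p : List Bool) : List ℕ :=
  if p.getLast? = some false then (descents p).dropLast else descents p

/-! ### The ballot recurrence -/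

theorem ballot_zero_right (k : ℕ) : ballot (k + 1) 0 = 1 := by simp [ballot]

/-- The defining identity of the ballot number, free of truncated subtraction. -/
theorem ballot_succ_add (k m : ℕ) :
    ballot (k + 1) (m + 1) + (2 * m + k + 2).choose m = (2 * m + k + 2).choose (m + 1) := by
  have h : (2 * m + k + 2).choose m ≤ (2 * m + k + 2).choose (m + 1) :=
    Nat.choose_le_succ_of_lt_half_left (by omega)
  have e : 2 * (m + 1) + (k + 1) - 1 = 2 * m + k + 2 := by omega
  simp only [ballot, e, Nat.add_eq_zero_iff, one_ne_zero, and_false, if_false,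
    Nat.add_sub_cancel]
  omega

theorem ballot_succ_succ (k m : ℕ) :
    ballot (k + 2) (m + 1) = ballot (k + 3) m + ballot (k + 1) (m + 1) := by
  have h1 := ballot_succ_add (k + 1) m
  have h2 := ballot_succ_add k m
  have p1 := Nat.choose_succ_succ' (2 * m + k + 2) m
  cases m with
  | zero =>
    have h0 : ballot (k + 3) 0 = 1 := ballot_zero_right (k + 2)
    simp only [mul_zero, zero_add, Nat.choose_zero_right, Nat.choose_one_right] at h1 h2 ⊢
    change ballot (k + 2) 1 + 1 = k + 1 + 2 at h1
    omega
  | succ m =>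
    have h3 := ballot_succ_add (k + 2) m
    have p2 := Nat.choose_succ_succ' (2 * (m + 1) + k + 2) m
    ring_nf at *
    omega

theorem ballot_one_succ (m : ℕ) : ballot 1 (m + 1) = ballot 2 m := by
  have h1 := ballot_succ_add 0 m
  have p1 := Nat.choose_succ_succ' (2 * m + 1) m
  have sy : (2 * m + 1).choose (m + 1) = (2 * m + 1).choose m := Nat.choose_symm_half m
  cases m with
  | zero => simp [ballot_zero_right] at *; omega
  | succ m =>
    have h3 := ballot_succ_add 1 m
    have p2 := Nat.choose_succ_succ' (2 * (m + 1) + 1) m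
    ring_nf at *
    omega

/-! ### Completions and their number -/

/-- `Good s h m w`: from height `h`, the word `w` consists of upsteps and `s` blocks `DU`, followed
by an arbitrary word staying weakly above the axis, ends at height `0`, and has `m` upsteps outside
the `s` blocks. That the blocks stay above the axis is not required: it is automatic for `h ≥ 1`. -/
def Good : ℕ → ℕ → ℕ → List Bool → Prop
  | s, h, m, [] => s = 0 ∧ h = 0 ∧ m = 0
  | s, h, m, true :: w => ∃ m', m = m' + 1 ∧ Good s (h + 1) m' w
  | 0, h, m, false :: w => ∃ h', h = h' + 1 ∧ Good 0 h' m w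
  | s + 1, h, m, false :: true :: w => Good s h m w
  | _ + 1, _, _, [false] => False
  | _ + 1, _, _, false :: false :: _ => False

theorem good_length (s h m : ℕ) (w : List Bool) (hw : Good s h m w) :
    w.length = h + 2 * m + 2 * s := by
  fun_induction Good s h m w with
  | case1 => simp; omega
  | case2 s h m w ih => obtain ⟨m', rfl, h'⟩ := hw; have := ih m' h'; simp; omega
  | case3 h m w ih => obtain ⟨m', rfl, h'⟩ := hw; have := ih m' h'; simp; omega
  | case4 s h m w ih => have := ih hw; simp; omega
  | case5 => exact hw.elim
  | case6 => exact hw.elim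

theorem good_finite (s h m : ℕ) : {w | Good s h m w}.Finite :=
  (List.finite_length_eq Bool (h + 2 * m + 2 * s)).subset fun w hw => good_length s h m w hw

theorem ncard_cons_union (a b : List Bool → List Bool) (ha : a.Injective) (hb : b.Injective)
    (hab : ∀ v w, a v ≠ b w) {A B : Set (List Bool)} (hA : A.Finite) (hB : B.Finite) :
    (a '' A ∪ b '' B).ncard = A.ncard + B.ncard := by
  rw [Set.ncard_union_eq _ (hA.image a) (hB.image b), Set.ncard_image_of_injective _ ha,
    Set.ncard_image_of_injective _ hb]
  rw [Set.disjoint_left]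
  rintro _ ⟨v, _, rfl⟩ ⟨w, _, h⟩
  exact hab v w h.symm

theorem inj_block : Function.Injective fun w : List Bool => false :: true :: w :=
  fun v w h => by simpa using h

theorem good_zero_zero_zero : {w | Good 0 0 0 w} = {[]} := by
  ext w
  rcases w with _ | ⟨_ | _, w⟩ <;> simp [Good]

theorem good_zero_zero_succ (m : ℕ) :
    {w | Good 0 0 (m + 1) w} = List.cons true '' {w | Good 0 1 m w} := by
  ext w
  rcases w with _ | ⟨_ | _, w⟩ <;> simp [Good]

theorem good_zero_succ_zero (h : ℕ) :
    {w | Good 0 (h + 1) 0 w} = List.cons false '' {w | Good 0 h 0 w} := by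
  ext w
  rcases w with _ | ⟨_ | _, w⟩ <;> simp [Good]

theorem good_zero_succ_succ (h m : ℕ) :
    {w | Good 0 (h + 1) (m + 1) w} =
      List.cons true '' {w | Good 0 (h + 2) m w} ∪ List.cons false '' {w | Good 0 h (m + 1) w} := by
  ext w
  rcases w with _ | ⟨_ | _, w⟩ <;> simp [Good]

theorem good_succ_zero (s h : ℕ) :
    {w | Good (s + 1) h 0 w} = (fun w => false :: true :: w) '' {w | Good s h 0 w} := by
  ext w
  rcases w with _ | ⟨_ | _, _ | ⟨_ | _, w⟩⟩ <;> simp [Good]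

theorem good_succ_succ (s h m : ℕ) :
    {w | Good (s + 1) h (m + 1) w} = List.cons true '' {w | Good (s + 1) (h + 1) m w} ∪
      (fun w => false :: true :: w) '' {w | Good s h (m + 1) w} := by
  ext w
  rcases w with _ | ⟨_ | _, _ | ⟨_ | _, w⟩⟩ <;> simp [Good]

theorem ncard_good (s h m : ℕ) : {w | Good s h m w}.ncard = ballot (h + s + 1) m := by
  match s, h, m with
  | 0, 0, 0 => rw [good_zero_zero_zero, ballot_zero_right, Set.ncard_singleton]
  | 0, 0, m + 1 =>
    rw [good_zero_zero_succ, Set.ncard_image_of_injective _ List.cons_injective,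
      ncard_good 0 1 m, ballot_one_succ]
  | 0, h + 1, 0 =>
    rw [good_zero_succ_zero, Set.ncard_image_of_injective _ List.cons_injective,
      ncard_good 0 h 0, ballot_zero_right, ballot_zero_right]
  | 0, h + 1, m + 1 =>
    rw [good_zero_succ_succ, ncard_cons_union _ _ List.cons_injective List.cons_injective
      (by simp) (good_finite _ _ _) (good_finite _ _ _), ncard_good 0 (h + 2) m,
      ncard_good 0 h (m + 1)]
    exact (ballot_succ_succ h m).symm
  | s + 1, h, 0 =>
    rw [good_succ_zero, Set.ncard_image_of_injective _ inj_block,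
      ncard_good s h 0, ballot_zero_right, ballot_zero_right]
  | s + 1, h, m + 1 =>
    rw [good_succ_succ, ncard_cons_union _ _ List.cons_injective inj_block
      (by simp) (good_finite _ _ _) (good_finite _ _ _), ncard_good (s + 1) (h + 1) m,
      ncard_good s h (m + 1)]
    have := ballot_succ_succ (h + s) m
    rw [show h + 1 + (s + 1) + 1 = h + s + 3 by ring, show h + (s + 1) + 1 = h + s + 2 by ring]
    exact this.symm
termination_by h + s + 2 * m

/-! ### Descents -/

theorem runLengths_cons (a : Bool) (w : List Bool) :
    ∃ k t, runLengths (a :: w) = (a, k + 1) :: t := by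
  rw [runLengths]
  rcases runLengths w with _ | ⟨⟨b, m⟩, t⟩
  · exact ⟨0, [], rfl⟩
  · by_cases hab : a = b
    · exact ⟨m, t, by simp [hab]⟩
    · exact ⟨0, (b, m) :: t, by simp [hab]⟩

theorem descents_true (w : List Bool) : descents (true :: w) = descents w := by
  unfold descents
  rw [runLengths]
  rcases runLengths w with _ | ⟨⟨_ | _, m⟩, t⟩ <;> simp

theorem descents_false_true (w : List Bool) :
    descents (false :: true :: w) = 1 :: descents w := by
  rw [← descents_true w]
  obtain ⟨k, t, h⟩ := runLengths_cons true w
  unfold descents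
  rw [runLengths, h]
  simp

theorem descents_false (w : List Bool) : ∃ k t, descents (false :: w) = (k + 1) :: t := by
  obtain ⟨k, t, h⟩ := runLengths_cons false w
  exact ⟨k, (t.filter fun r => !r.1).map Prod.snd, by simp [descents, h]⟩

theorem descents_false_false (w : List Bool) :
    ∃ k t, descents (false :: false :: w) = (k + 2) :: t := by
  obtain ⟨k, t, h⟩ := runLengths_cons false w
  refine ⟨k, (t.filter fun r => !r.1).map Prod.snd, ?_⟩
  unfold descents
  rw [runLengths, h]
  simp

theorem descents_ne_nil (w : List Bool) (hw : false ∈ w) : descents w ≠ [] := by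
  induction w with
  | nil => simp at hw
  | cons a w ih =>
    cases a with
    | false => obtain ⟨k, t, h⟩ := descents_false w; simp [h]
    | true => rw [descents_true]; exact ih (by simpa using hw)

theorem nonfinalDescents_true (w : List Bool) :
    nonfinalDescents (true :: w) = nonfinalDescents w := by
  rcases w with _ | ⟨b, w⟩
  · rfl
  · simp only [nonfinalDescents, descents_true, List.getLast?_cons_cons]

theorem nonfinalDescents_replicate (r : ℕ) (w : List Bool) :
    nonfinalDescents (List.replicate r true ++ w) = nonfinalDescents w := by
  induction r with
  | zero => simp
  | succ r ih => rw [List.replicate_succ, List.cons_append, nonfinalDescents_true, ih]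

theorem nonfinalDescents_false_true (w : List Bool) :
    nonfinalDescents (false :: true :: w) = 1 :: nonfinalDescents w := by
  rcases w with _ | ⟨b, w⟩
  · rfl
  · simp only [nonfinalDescents, descents_false_true, List.getLast?_cons_cons]
    split_ifs with h
    · exact List.dropLast_cons_of_ne_nil (descents_ne_nil _ (List.mem_of_getLast? h))
    · rfl

/-- The first `s` nonfinal descents exist and all have length `1`. -/
def UnitDescents (s : ℕ) (w : List Bool) : Prop :=
  s ≤ (nonfinalDescents w).length ∧ ∀ d ∈ (nonfinalDescents w).take s, d = 1

theorem unitDescents_zero (w : List Bool) : UnitDescents 0 w := by simp [UnitDescents]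

theorem unitDescents_true (s : ℕ) (w : List Bool) :
    UnitDescents s (true :: w) ↔ UnitDescents s w := by
  simp only [UnitDescents, nonfinalDescents_true]

theorem unitDescents_false_true (s : ℕ) (w : List Bool) :
    UnitDescents (s + 1) (false :: true :: w) ↔ UnitDescents s w := by
  simp [UnitDescents, nonfinalDescents_false_true]

theorem not_unitDescents_singleton (s : ℕ) : ¬ UnitDescents (s + 1) [false] := by
  simp [UnitDescents, nonfinalDescents, descents, runLengths]

theorem not_unitDescents_false_false (s : ℕ) (w : List Bool) :
    ¬ UnitDescents (s + 1) (false :: false :: w) := by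
  obtain ⟨k, t, h⟩ := descents_false_false w
  rintro ⟨h1, h2⟩
  unfold nonfinalDescents at h1 h2
  rw [h] at h1 h2
  split_ifs at h1 h2
  · rcases t with _ | ⟨b, t⟩
    · simp at h1
    · have := h2 (k + 2) (by simp)
      omega
  · have := h2 (k + 2) (by simp)
    omega

/-- Every nonfinal descent is followed by an upstep. -/
theorem UnitDescents.le_count (s : ℕ) (w : List Bool) (h : UnitDescents s w) :
    s ≤ w.count true := by
  match s, w with
  | 0, _ => exact Nat.zero_le _
  | s + 1, [] => simp [UnitDescents, nonfinalDescents, descents, runLengths] at h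
  | s + 1, true :: w =>
    have := UnitDescents.le_count (s + 1) w ((unitDescents_true _ _).1 h)
    simp
    omega
  | s + 1, [false] => exact absurd h (not_unitDescents_singleton s)
  | s + 1, false :: true :: w =>
    have := UnitDescents.le_count s w ((unitDescents_false_true _ _).1 h)
    simp
    omega
  | s + 1, false :: false :: w => exact absurd h (not_unitDescents_false_false s w)

/-! ### Completions as suffixes of Dyck paths -/

/-- The path `w` started at height `h` stays weakly above the axis. -/
def NonnegFrom (h : ℕ) (w : List Bool) : Prop :=
  ∀ t : ℕ, (w.take t).count false ≤ h + (w.take t).count true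

theorem nonnegFrom_nil (h : ℕ) : NonnegFrom h [] := by simp [NonnegFrom]

theorem nonnegFrom_true (h : ℕ) (w : List Bool) :
    NonnegFrom h (true :: w) ↔ NonnegFrom (h + 1) w := by
  constructor
  · intro H t
    have := H (t + 1)
    simp at this
    omega
  · rintro H (_ | t)
    · simp
    · have := H t
      simp
      omega

theorem nonnegFrom_false (h : ℕ) (w : List Bool) :
    NonnegFrom h (false :: w) ↔ ∃ h', h = h' + 1 ∧ NonnegFrom h' w := by
  constructor
  · intro H
    obtain _ | h := h
    · have := H 1
      simp at this
    · refine ⟨h, rfl, fun t => ?_⟩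
      have := H (t + 1)
      simp at this
      omega
  · rintro ⟨h, rfl, H⟩ (_ | t)
    · simp
    · have := H t
      simp
      omega

theorem nonnegFrom_replicate (r h : ℕ) (w : List Bool) :
    NonnegFrom h (List.replicate r true ++ w) ↔ NonnegFrom (h + r) w := by
  induction r generalizing h with
  | zero => simp
  | succ r ih =>
    rw [List.replicate_succ, List.cons_append, nonnegFrom_true, ih, Nat.add_right_comm, add_assoc]

theorem good_iff (s h m : ℕ) (w : List Bool) (hs : s = 0 ∨ 1 ≤ h) :
    Good s h m w ↔ w.count true = m + s ∧ w.count false = h + m + s ∧ NonnegFrom h w ∧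
      UnitDescents s w := by
  fun_induction Good s h m w with
  | case1 s h m =>
    constructor
    · rintro ⟨rfl, rfl, rfl⟩
      exact ⟨rfl, rfl, nonnegFrom_nil 0, unitDescents_zero _⟩
    · rintro ⟨h1, h2, -⟩
      simp at h1 h2
      omega
  | case2 s h m w ih =>
    rw [nonnegFrom_true, unitDescents_true]
    constructor
    · rintro ⟨m', rfl, H⟩
      obtain ⟨h1, h2, h3⟩ := (ih m' (by omega)).1 H
      refine ⟨?_, ?_, h3⟩ <;> simp <;> omega
    · rintro ⟨h1, h2, h3⟩
      simp at h1 h2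
      -- `m = 0` is impossible: `w` would have too few upsteps for its `s` blocks.
      have := h3.2.le_count
      obtain ⟨m', rfl⟩ : ∃ m', m = m' + 1 := ⟨m - 1, by omega⟩
      exact ⟨m', rfl, (ih m' (by omega)).2 ⟨by omega, by omega, h3⟩⟩
  | case3 h m w ih =>
    rw [nonnegFrom_false]
    constructor
    · rintro ⟨h', rfl, H⟩
      obtain ⟨h1, h2, h3, -⟩ := (ih h' (by omega)).1 H
      refine ⟨?_, ?_, ⟨h', rfl, h3⟩, unitDescents_zero _⟩ <;> simp <;> omega
    · rintro ⟨h1, h2, ⟨h', rfl, h3⟩, -⟩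
      simp at h1 h2
      exact ⟨h', rfl, (ih h' (by omega)).2 ⟨by omega, by omega, h3, unitDescents_zero _⟩⟩
  | case4 s h m w ih =>
    rw [nonnegFrom_false, unitDescents_false_true, ih (by omega)]
    constructor
    · rintro ⟨h1, h2, h3, h4⟩
      obtain ⟨h', rfl⟩ : ∃ h', h = h' + 1 := ⟨h - 1, by omega⟩
      refine ⟨?_, ?_, ⟨h', rfl, (nonnegFrom_true _ _).2 h3⟩, h4⟩ <;> simp <;> omega
    · rintro ⟨h1, h2, ⟨h', rfl, h3⟩, h4⟩
      simp at h1 h2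
      exact ⟨by omega, by omega, (nonnegFrom_true _ _).1 h3, h4⟩
  | case5 => simp [not_unitDescents_singleton]
  | case6 s h m w => simp [not_unitDescents_false_false]

theorem le_firstAscent_iff (r : ℕ) (p : List Bool) :
    r ≤ firstAscent p ↔ ∃ w, p = List.replicate r true ++ w := by
  induction r generalizing p with
  | zero => simp
  | succ r ih =>
    rcases p with _ | ⟨_ | _, p⟩
    · simp [firstAscent]
    · simp [firstAscent, List.replicate_succ]
    · have := ih p
      simpa [firstAscent, List.replicate_succ] using this

/-- For `r ≥ 1`, `s ≥ 0` and `n ≥ r + s`, the number of Dyck `n`-paths with first ascent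
`≥ r` whose first `s` nonfinal descents all have length `1` is `C^{(r+s+1)}_{n-r-s}`. -/
theorem dyck_nonfinalDescents_count (r s n : ℕ) (hr : 1 ≤ r) (hn : r + s ≤ n) :
    Nat.card {p : List Bool // IsDyck n p ∧ r ≤ firstAscent p ∧
        s ≤ (nonfinalDescents p).length ∧
        ∀ d ∈ (nonfinalDescents p).take s, d = 1}
      = ballot (r + s + 1) (n - r - s) := by
  rw [← ncard_good]
  obtain ⟨m, rfl⟩ := Nat.exists_eq_add_of_le hn
  rw [show r + s + m - r - s = m by omega,
    ← Set.ncard_image_of_injective _ (List.append_right_injective (List.replicate r true)),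
    ← Nat.card_coe_set_eq]
  congr! 2
  ext p
  have key (w : List Bool) : IsDyck (r + s + m) (List.replicate r true ++ w) ↔
      w.count true = m + s ∧ w.count false = r + m + s ∧ NonnegFrom r w := by
    have hq : IsFirstQuadrant (List.replicate r true ++ w) ↔ NonnegFrom r w := by
      have := nonnegFrom_replicate r 0 w
      simpa only [NonnegFrom, IsFirstQuadrant, zero_add] using this
    rw [IsDyck, hq, List.count_append, List.count_append, List.count_replicate_self,
      List.count_replicate, if_neg (by decide), ← and_assoc, ← and_assoc]
    refine and_congr_left fun _ => ?_
    omega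
  simp only [Set.mem_image, Set.mem_ofPred_eq, le_firstAscent_iff]
  constructor
  · rintro ⟨h1, ⟨w, rfl⟩, h2⟩
    rw [nonfinalDescents_replicate] at h2
    obtain ⟨h3, h4, h5⟩ := (key w).1 h1
    exact ⟨w, (good_iff s r m w (Or.inr hr)).2 ⟨h3, h4, h5, h2⟩, rfl⟩
  · rintro ⟨w, h, rfl⟩
    obtain ⟨h3, h4, h5, h6⟩ := (good_iff s r m w (Or.inr hr)).1 h
    rw [nonfinalDescents_replicate]
    exact ⟨(key w).2 ⟨h3, h4, h5⟩, ⟨w, rfl⟩, h6⟩
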